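/- Let (j_{0,k})_{k ≥ 1} denote the strictly increasing enumeration of the positive zeros of J_0, let (ω_k)_{k ≥ 1} be the strictly increasing enumeration of the set {j_{0,n}^2 − j_{0,p}^2 : p ∈ {1, 2, 3}, n ≥ p + 1}, and set ω_0 := 0 and ω_{−k} := −ω_k for k ≥ 1. Then for every T > 0 the family {t ↦ e^{i ω_n t} : n ∈ ℤ} is minimal in L^2((0,T); ℂ): for every m ∈ ℤ, the function t ↦ e^{i ω_m t} does not belong to the closure in L^2((0,T); ℂ) of the linear span of {t ↦ e^{i ω_n t} : n ∈ ℤ, n ≠ m}. -/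

import Mathlib

open MeasureTheory Complex

/-- Bessel function of the first kind of integer order `ν`, defined by its
everywhere-convergent power series. -/
noncomputable def besselJ (ν : ℕ) (x : ℝ) : ℝ :=
  ∑' m : ℕ, ((-1 : ℝ) ^ m / ((Nat.factorial m : ℝ) * (Nat.factorial (m + ν) : ℝ)))
    * (x / 2) ^ (2 * m + ν)

/-!
Between consecutive positive zeros `a < b` of `J_ν`, the function `s ↦ J_ν (exp s)` solves
`w'' = -(exp (2 s) - ν ^ 2) w` with `exp (2 s) - ν ^ 2 < b ^ 2`, so Sturm comparison with
`sin (b s)` gives `π ≤ b (log b - log a)`. Hence the zeros have gaps bounded below,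
`j_n ^ 2 - j_p ^ 2` grows at least like `(n - p) ^ 2`, and `∑ 1 / |ω_n - ω_m|` converges.

Given such convergence, the operator `f ↦ (f (· + h) - exp (i λ h) f) / 2` annihilates
`exp (i λ t)`, multiplies `exp (i μ t)` by a number of modulus `|sin ((μ - λ) h / 2)|`, does not
increase the `L²` norm and shortens the interval by `h`. The choice `h = π / |μ - λ|` makes this
modulus equal to `1`. Using it for all but finitely many of the frequencies `λ ≠ μ`, and a smaller
`h` for the others, all of them can be annihilated on an interval of length `T` while
`exp (i μ t)` keeps a coefficient bounded away from `0`.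
-/

open scoped Real Topology

section ExponentialFamily

variable {ι : Type*}

lemma norm_exp_I_mul_ofReal_mul_ofReal (x t : ℝ) : ‖exp (I * x * t)‖ = 1 := by
  rw [mul_assoc, ← ofReal_mul, norm_exp_I_mul_ofReal]

lemma norm_exp_sub_exp_div_two (x y h : ℝ) :
    ‖(exp (I * x * h) - exp (I * y * h)) / 2‖ = |Real.sin ((x - y) * h / 2)| := by
  have factor : exp (I * x * h) - exp (I * y * h) =
      exp (I * y * h) * (exp (I * ((x - y) * h : ℝ)) - 1) := by
    rw [mul_sub, ← exp_add, mul_one]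
    congr 2
    push_cast
    ring
  rw [factor, norm_div, norm_mul, norm_exp_I_mul_ofReal_mul_ofReal,
    norm_exp_I_mul_ofReal_sub_one, norm_mul]
  simp

lemma abs_sin_mul_div_two_eq_sin_abs {d h : ℝ} (h_nonneg : 0 ≤ h) (h_le : |d| * h ≤ π) :
    |Real.sin (d * h / 2)| = Real.sin (|d| * h / 2) := by
  have abs_eq : |d * h / 2| = |d| * h / 2 := by
    rw [abs_div, abs_mul, abs_of_nonneg h_nonneg, abs_two]
  rw [Real.abs_sin_eq_sin_abs_of_abs_le_pi (by rw [abs_eq]; linarith [Real.pi_pos]), abs_eq]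

lemma abs_sin_mul_div_two_pos {d h : ℝ} (hd : d ≠ 0) (h_pos : 0 < h) (h_le : h ≤ π / |d|) :
    0 < |Real.sin (d * h / 2)| := by
  have hd' : 0 < |d| := abs_pos.2 hd
  rw [le_div_iff₀' hd'] at h_le
  rw [abs_sin_mul_div_two_eq_sin_abs h_pos.le h_le]
  exact Real.sin_pos_of_pos_of_lt_pi (by positivity) (by linarith [Real.pi_pos])

lemma abs_sin_mul_pi_div_abs_div_two {d : ℝ} (hd : d ≠ 0) :
    |Real.sin (d * (π / |d|) / 2)| = 1 := by
  have mul_cancel : |d| * (π / |d|) = π := mul_div_cancel₀ π (abs_ne_zero.2 hd)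
  rw [abs_sin_mul_div_two_eq_sin_abs (by positivity) mul_cancel.le, mul_cancel,
    Real.sin_pi_div_two]

lemma norm_sub_mul_div_two_sq_le {u : ℂ} (hu : ‖u‖ ≤ 1) (z w : ℂ) :
    ‖(z - u * w) / 2‖ ^ 2 ≤ ‖z‖ ^ 2 / 2 + ‖w‖ ^ 2 / 2 := by
  have triangle : ‖z - u * w‖ ≤ ‖z‖ + ‖w‖ := by
    refine (norm_sub_le _ _).trans ?_
    rw [norm_mul]
    gcongr
    exact mul_le_of_le_one_left (norm_nonneg w) hu
  rw [norm_div, div_pow, norm_ofNat]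
  nlinarith [sq_nonneg (‖z‖ - ‖w‖), norm_nonneg (z - u * w)]

lemma integral_norm_comp_add_sub_mul_div_two_sq_le {f : ℝ → ℂ} (hf : Continuous f) {h L : ℝ}
    (hh : 0 ≤ h) (hL : 0 ≤ L) {u : ℂ} (hu : ‖u‖ ≤ 1) :
    ∫ t in (0 : ℝ)..L, ‖(f (t + h) - u * f t) / 2‖ ^ 2 ≤ ∫ t in (0 : ℝ)..(L + h), ‖f t‖ ^ 2 := by
  have hint (a b : ℝ) : IntervalIntegrable (fun t ↦ ‖f t‖ ^ 2) volume a b :=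
    Continuous.intervalIntegrable (by fun_prop) a b
  have mono_right : ∫ t in h..(L + h), ‖f t‖ ^ 2 ≤ ∫ t in (0 : ℝ)..(L + h), ‖f t‖ ^ 2 :=
    intervalIntegral.integral_mono_interval hh (by linarith) le_rfl
      (.of_forall fun _ ↦ by positivity) (hint _ _)
  have mono_left : ∫ t in (0 : ℝ)..L, ‖f t‖ ^ 2 ≤ ∫ t in (0 : ℝ)..(L + h), ‖f t‖ ^ 2 :=
    intervalIntegral.integral_mono_interval le_rfl hL (by linarith)
      (.of_forall fun _ ↦ by positivity) (hint _ _)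
  calc ∫ t in (0 : ℝ)..L, ‖(f (t + h) - u * f t) / 2‖ ^ 2
      ≤ ∫ t in (0 : ℝ)..L, (‖f (t + h)‖ ^ 2 / 2 + ‖f t‖ ^ 2 / 2) :=
        intervalIntegral.integral_mono_on hL (Continuous.intervalIntegrable (by fun_prop) _ _)
          (Continuous.intervalIntegrable (by fun_prop) _ _)
          fun t _ ↦ norm_sub_mul_div_two_sq_le hu _ _
    _ = (∫ t in h..(L + h), ‖f t‖ ^ 2) / 2 + (∫ t in (0 : ℝ)..L, ‖f t‖ ^ 2) / 2 := by
        rw [intervalIntegral.integral_add (Continuous.intervalIntegrable (by fun_prop) _ _)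
            ((hint _ _).div_const 2), intervalIntegral.integral_div, intervalIntegral.integral_div,
          intervalIntegral.integral_comp_add_right (fun t ↦ ‖f t‖ ^ 2), zero_add]
    _ ≤ ∫ t in (0 : ℝ)..(L + h), ‖f t‖ ^ 2 := by linarith

lemma mul_exp_comp_add_sub_div_two (b : ℂ) (x y h t : ℝ) :
    (b * exp (I * x * (t + h : ℝ)) - exp (I * y * h) * (b * exp (I * x * t))) / 2 =
      b * ((exp (I * x * h) - exp (I * y * h)) / 2) * exp (I * x * t) := by
  rw [ofReal_add, mul_add, exp_add]
  ring

lemma add_sum_mul_exp_comp_add_sub_div_two (l : ι → ℝ) (S : Finset ι) (b : ℂ) (c : ι → ℂ)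
    (x y h t : ℝ) :
    ((b * exp (I * x * (t + h : ℝ)) + ∑ n ∈ S, c n * exp (I * l n * (t + h : ℝ))) -
        exp (I * y * h) * (b * exp (I * x * t) + ∑ n ∈ S, c n * exp (I * l n * t))) / 2 =
      b * ((exp (I * x * h) - exp (I * y * h)) / 2) * exp (I * x * t) +
        ∑ n ∈ S, c n * ((exp (I * l n * h) - exp (I * y * h)) / 2) * exp (I * l n * t) := by
  simp only [← mul_exp_comp_add_sub_div_two]
  rw [← Finset.sum_div, Finset.sum_sub_distrib, ← Finset.mul_sum]
  ring

lemma prod_abs_sin_sq_mul_le_integral (l h : ι → ℝ) (hh : ∀ n, 0 ≤ h n) (x : ℝ) (S : Finset ι)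
    (b : ℂ) (c : ι → ℂ) {L : ℝ} (hL : 0 ≤ L) :
    ‖b‖ ^ 2 * (∏ n ∈ S, |Real.sin ((x - l n) * h n / 2)|) ^ 2 * L ≤
      ∫ t in (0 : ℝ)..(L + ∑ n ∈ S, h n),
        ‖b * exp (I * x * t) + ∑ n ∈ S, c n * exp (I * l n * t)‖ ^ 2 := by
  classical
  induction S using Finset.induction_on generalizing b c with
  | empty =>
    simp only [Finset.prod_empty, Finset.sum_empty, add_zero, norm_mul,
      norm_exp_I_mul_ofReal_mul_ofReal, mul_one, one_pow, intervalIntegral.integral_const, sub_zero,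
      smul_eq_mul]
    rw [mul_comm]
  | insert a S ha ih =>
    set factor : ℝ → ℂ := fun y ↦ (exp (I * y * h a) - exp (I * l a * h a)) / 2 with factor_def
    set f : ℝ → ℂ := fun t ↦ b * exp (I * x * t) + ∑ n ∈ insert a S, c n * exp (I * l n * t)
      with f_def
    have filtered (t : ℝ) : b * factor x * exp (I * x * t) +
        ∑ n ∈ S, c n * factor (l n) * exp (I * l n * t) =
        (f (t + h a) - exp (I * l a * h a) * f t) / 2 := by
      have annihilated : factor (l a) = 0 := by simp [factor_def]
      rw [f_def, add_sum_mul_exp_comp_add_sub_div_two l, Finset.sum_insert ha]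
      change _ = _ + (c a * factor (l a) * _ + _)
      rw [annihilated, mul_zero, zero_mul, zero_add]
    have sum_nonneg : 0 ≤ ∑ n ∈ S, h n := Finset.sum_nonneg fun n _ ↦ hh n
    calc ‖b‖ ^ 2 * (∏ n ∈ insert a S, |Real.sin ((x - l n) * h n / 2)|) ^ 2 * L
        = ‖b * factor x‖ ^ 2 * (∏ n ∈ S, |Real.sin ((x - l n) * h n / 2)|) ^ 2 * L := by
          rw [Finset.prod_insert ha, norm_mul, factor_def, norm_exp_sub_exp_div_two]
          ring
      _ ≤ ∫ t in (0 : ℝ)..(L + ∑ n ∈ S, h n), ‖b * factor x * exp (I * x * t) +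
            ∑ n ∈ S, c n * factor (l n) * exp (I * l n * t)‖ ^ 2 := ih _ _
      _ = ∫ t in (0 : ℝ)..(L + ∑ n ∈ S, h n),
            ‖(f (t + h a) - exp (I * l a * h a) * f t) / 2‖ ^ 2 := by
          simp only [filtered]
      _ ≤ ∫ t in (0 : ℝ)..(L + ∑ n ∈ S, h n + h a), ‖f t‖ ^ 2 :=
          integral_norm_comp_add_sub_mul_div_two_sq_le (by fun_prop) (hh a) (by positivity)
            (norm_exp_I_mul_ofReal_mul_ofReal _ _).le
      _ = ∫ t in (0 : ℝ)..(L + ∑ n ∈ insert a S, h n), ‖f t‖ ^ 2 := by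
          rw [Finset.sum_insert ha, add_comm (h a), add_assoc]

lemma exists_le_and_eq_compl_finset_and_sum_le {a : ι → ℝ} (a_pos : ∀ n, 0 < a n)
    (ha : Summable a) {δ : ℝ} (hδ : 0 < δ) :
    ∃ (F : Finset ι) (h : ι → ℝ), (∀ n, 0 < h n) ∧ (∀ n, h n ≤ a n) ∧ (∀ n ∉ F, h n = a n) ∧
      ∀ S : Finset ι, ∑ n ∈ S, h n ≤ δ := by
  classical
  obtain ⟨F, hF⟩ := summable_iff_vanishing.1 ha (Set.Iio (δ / 2)) (Iio_mem_nhds (half_pos hδ))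
  have hA : 0 ≤ ∑ n ∈ F, a n := Finset.sum_nonneg fun n _ ↦ (a_pos n).le
  set θ := δ / 2 / (δ / 2 + ∑ n ∈ F, a n) with hθ
  have θ_pos : 0 < θ := by positivity
  have θ_le_one : θ ≤ 1 := div_le_one_of_le₀ (by linarith) (by positivity)
  have h_pos (n : ι) : 0 < if n ∈ F then θ * a n else a n := by
    split_ifs
    exacts [mul_pos θ_pos (a_pos n), a_pos n]
  have h_le (n : ι) : (if n ∈ F then θ * a n else a n) ≤ a n := by
    split_ifs
    exacts [mul_le_of_le_one_left (a_pos n).le θ_le_one, le_rfl]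
  refine ⟨F, fun n ↦ if n ∈ F then θ * a n else a n, h_pos, h_le, fun n hn ↦ if_neg hn,
    fun S ↦ ?_⟩
  have inside : ∑ n ∈ S ∩ F, (if n ∈ F then θ * a n else a n) ≤ δ / 2 := calc
    _ ≤ ∑ n ∈ F, (if n ∈ F then θ * a n else a n) :=
      Finset.sum_le_sum_of_subset_of_nonneg Finset.inter_subset_right fun n _ _ ↦ (h_pos n).le
    _ = θ * ∑ n ∈ F, a n := by
      rw [Finset.mul_sum]
      exact Finset.sum_congr rfl fun n hn ↦ if_pos hn
    _ ≤ δ / 2 := by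
      rw [hθ, div_mul_eq_mul_div, div_le_iff₀ (by positivity)]
      nlinarith
  have outside : ∑ n ∈ S \ F, (if n ∈ F then θ * a n else a n) ≤ δ / 2 :=
    (Finset.sum_le_sum fun n _ ↦ h_le n).trans (hF (S \ F) Finset.sdiff_disjoint).le
  rw [← Finset.sum_inter_add_sum_sdiff S F]
  linarith

lemma exists_pos_le_prod_of_eq_one_compl_finset {s : ι → ℝ} (s_pos : ∀ n, 0 < s n)
    (s_le_one : ∀ n, s n ≤ 1) (F : Finset ι) (s_eq_one : ∀ n ∉ F, s n = 1) :
    ∃ P, 0 < P ∧ ∀ S : Finset ι, P ≤ ∏ n ∈ S, s n := by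
  classical
  refine ⟨∏ n ∈ F, s n, Finset.prod_pos fun n _ ↦ s_pos n, fun S ↦ ?_⟩
  rw [Finset.prod_subset (Finset.subset_union_left (s₂ := S)) fun n _ hn ↦ s_eq_one n hn]
  exact Finset.prod_le_prod_of_subset_of_le_one Finset.subset_union_right
    (fun n _ ↦ (s_pos n).le) fun n _ _ ↦ s_le_one n

lemma exists_pos_le_integral_norm_exp_sub_sum_sq {l : ι → ℝ} {x : ℝ} (hne : ∀ n, x ≠ l n)
    (hs : Summable fun n ↦ |x - l n|⁻¹) {T : ℝ} (hT : 0 < T) :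
    ∃ ε : ℝ, 0 < ε ∧ ∀ (S : Finset ι) (c : ι → ℂ),
      ε ≤ ∫ t in (0 : ℝ)..T,
        ‖exp (I * x * t) - ∑ n ∈ S, c n * exp (I * l n * t)‖ ^ 2 := by
  have sub_ne (n : ι) : x - l n ≠ 0 := sub_ne_zero.2 (hne n)
  obtain ⟨F, h, h_pos, h_le, h_eq, h_sum⟩ := exists_le_and_eq_compl_finset_and_sum_le
    (fun n ↦ div_pos Real.pi_pos (abs_pos.2 (sub_ne n)))
    (by simpa only [div_eq_mul_inv] using hs.mul_left π) (half_pos hT)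
  obtain ⟨P, P_pos, hP⟩ := exists_pos_le_prod_of_eq_one_compl_finset
    (s := fun n ↦ |Real.sin ((x - l n) * h n / 2)|)
    (fun n ↦ abs_sin_mul_div_two_pos (sub_ne n) (h_pos n) (h_le n))
    (fun n ↦ Real.abs_sin_le_one _) F
    (fun n hn ↦ by rw [h_eq n hn, abs_sin_mul_pi_div_abs_div_two (sub_ne n)])
  refine ⟨P ^ 2 * (T / 2), by positivity, fun S c ↦ ?_⟩
  have hS := h_sum S
  calc P ^ 2 * (T / 2)
      ≤ ‖(1 : ℂ)‖ ^ 2 * (∏ n ∈ S, |Real.sin ((x - l n) * h n / 2)|) ^ 2 *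
          (T - ∑ n ∈ S, h n) := by
        rw [norm_one, one_pow, one_mul]
        gcongr
        · exact hP S
        · linarith
    _ ≤ _ := prod_abs_sin_sq_mul_le_integral l h (fun n ↦ (h_pos n).le) x S 1 (fun n ↦ -c n)
          (by linarith)
    _ = _ := by simp [sub_eq_add_neg]

lemma exists_pos_le_integral_norm_exp_sub_tsum_sq {l : ι → ℝ} (hl : Function.Injective l) (m : ι)
    (hs : Summable fun n ↦ |l m - l n|⁻¹) {T : ℝ} (hT : 0 < T) :
    ∃ ε : ℝ, 0 < ε ∧ ∀ c : ι → ℂ, (Function.support c).Finite → c m = 0 →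
      ε ≤ ∫ t in (0 : ℝ)..T,
        ‖exp (I * l m * t) - ∑' n, c n * exp (I * l n * t)‖ ^ 2 := by
  classical
  obtain ⟨ε, ε_pos, hε⟩ := exists_pos_le_integral_norm_exp_sub_sum_sq
    (l := fun n : {n // n ≠ m} ↦ l n) (x := l m) (fun n ↦ hl.ne n.2.symm)
    (hs.comp_injective Subtype.val_injective) hT
  refine ⟨ε, ε_pos, fun c hc hcm ↦ ?_⟩
  have tsum_eq (t : ℝ) : ∑' n, c n * exp (I * l n * t) =
      ∑ n ∈ hc.toFinset.subtype (· ≠ m), c n * exp (I * l n * t) := by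
    rw [Finset.sum_subtype_of_mem (fun n ↦ c n * exp (I * l n * t))
      fun n hn ↦ ne_of_mem_of_not_mem (hc.mem_toFinset.1 hn) (not_not.2 hcm)]
    exact tsum_eq_sum fun n hn ↦ by simp_all
  simpa only [tsum_eq] using hε (hc.toFinset.subtype (· ≠ m)) fun n ↦ c n

end ExponentialFamily

section Sturm

lemma nonpos_of_hasDerivAt_of_eventually_le {f : ℝ → ℝ} {f' b : ℝ} (hf : HasDerivAt f f' b)
    (h : ∀ᶠ s in 𝓝[<] b, f b ≤ f s) : f' ≤ 0 := by
  have slope_tendsto : Filter.Tendsto (slope f b) (𝓝[<] b) (𝓝 f') :=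
    (hasDerivAt_iff_tendsto_slope.1 hf).mono_left (nhdsWithin_mono b fun _ hs ↦ ne_of_lt hs)
  refine le_of_tendsto slope_tendsto ?_
  filter_upwards [h, self_mem_nhdsWithin] with s hs hsb
  rw [slope_def_field]
  exact div_nonpos_of_nonneg_of_nonpos (sub_nonneg.2 hs) (sub_nonpos.2 (le_of_lt hsb))

lemma forall_pos_or_forall_neg_of_forall_ne_zero {X : Type*} [TopologicalSpace X] {f : X → ℝ}
    {s : Set X} (hs : IsPreconnected s) (hf : ContinuousOn f s) (hne : ∀ x ∈ s, f x ≠ 0) :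
    (∀ x ∈ s, 0 < f x) ∨ ∀ x ∈ s, f x < 0 := by
  by_contra! h
  obtain ⟨⟨x, hx, hfx⟩, y, hy, hfy⟩ := h
  obtain ⟨z, hz, hfz⟩ := hs.intermediate_value hx hy hf ⟨hfx, hfy⟩
  exact hne z hz hfz

variable {w w' q : ℝ → ℝ} {α β M : ℝ}

/-- The Wronskian of `w` and `sin (M (s - α))` vanishes at `α` and increases as long as both
functions are positive, which would force `0 < w' β`. -/
lemma pi_le_mul_sub_of_forall_pos (hαβ : α < β) (hM : 0 < M)
    (hw : ∀ s ∈ Set.Icc α β, HasDerivAt w (w' s) s)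
    (hw' : ∀ s ∈ Set.Icc α β, HasDerivAt w' (-(q s * w s)) s)
    (hq : ∀ s ∈ Set.Ioo α β, q s < M ^ 2) (hα : w α = 0) (hβ : w β = 0)
    (hpos : ∀ s ∈ Set.Ioo α β, 0 < w s) : π ≤ M * (β - α) := by
  by_contra! hlt
  set W : ℝ → ℝ := fun s ↦ w' s * Real.sin (M * (s - α)) - w s * (M * Real.cos (M * (s - α)))
    with W_def
  have hW (s : ℝ) (hs : s ∈ Set.Icc α β) :
      HasDerivAt W ((M ^ 2 - q s) * (w s * Real.sin (M * (s - α)))) s := by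
    have hlin : HasDerivAt (fun s ↦ M * (s - α)) M s := by
      simpa using ((hasDerivAt_id s).sub_const α).const_mul M
    refine (((hw' s hs).mul hlin.sin).sub ((hw s hs).mul (hlin.cos.const_mul M))).congr_deriv ?_
    ring
  have sin_pos (s : ℝ) (hs : s ∈ Set.Ioc α β) : 0 < Real.sin (M * (s - α)) := by
    refine Real.sin_pos_of_pos_of_lt_pi (mul_pos hM (sub_pos.2 hs.1)) (lt_of_le_of_lt ?_ hlt)
    gcongr
    exact hs.2
  have W_strictMonoOn : StrictMonoOn W (Set.Icc α β) := by
    refine strictMonoOn_of_deriv_pos (convex_Icc α β)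
      (fun s hs ↦ (hW s hs).continuousAt.continuousWithinAt) fun s hs ↦ ?_
    rw [interior_Icc] at hs
    rw [(hW s (Set.Ioo_subset_Icc_self hs)).deriv]
    exact mul_pos (sub_pos.2 (hq s hs))
      (mul_pos (hpos s hs) (sin_pos s (Set.Ioo_subset_Ioc_self hs)))
  have W_lt := W_strictMonoOn (Set.left_mem_Icc.2 hαβ.le) (Set.right_mem_Icc.2 hαβ.le) hαβ
  simp only [W_def, hα, hβ, sub_self, mul_zero, Real.sin_zero, zero_mul, sub_zero] at W_lt
  have deriv_pos : 0 < w' β := pos_of_mul_pos_left W_lt (sin_pos β (Set.right_mem_Ioc.2 hαβ)).le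
  refine deriv_pos.not_ge (nonpos_of_hasDerivAt_of_eventually_le
    (hw β (Set.right_mem_Icc.2 hαβ.le)) ?_)
  filter_upwards [Ioo_mem_nhdsLT hαβ] with s hs
  exact hβ ▸ (hpos s hs).le

lemma pi_le_mul_sub_of_consecutive_zeros (hαβ : α < β) (hM : 0 < M)
    (hw : ∀ s ∈ Set.Icc α β, HasDerivAt w (w' s) s)
    (hw' : ∀ s ∈ Set.Icc α β, HasDerivAt w' (-(q s * w s)) s)
    (hq : ∀ s ∈ Set.Ioo α β, q s < M ^ 2) (hα : w α = 0) (hβ : w β = 0)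
    (hne : ∀ s ∈ Set.Ioo α β, w s ≠ 0) : π ≤ M * (β - α) := by
  have hcont : ContinuousOn w (Set.Ioo α β) := fun s hs ↦
    (hw s (Set.Ioo_subset_Icc_self hs)).continuousAt.continuousWithinAt
  rcases forall_pos_or_forall_neg_of_forall_ne_zero isPreconnected_Ioo hcont hne with hpos | hneg
  · exact pi_le_mul_sub_of_forall_pos hαβ hM hw hw' hq hα hβ hpos
  · refine pi_le_mul_sub_of_forall_pos (w := -w) (w' := -w') (q := q) hαβ hM
      (fun s hs ↦ (hw s hs).neg) (fun s hs ↦ (hw' s hs).neg.congr_deriv ?_) hq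
      (by simp [hα]) (by simp [hβ]) fun s hs ↦ neg_pos.2 (hneg s hs)
    simp

end Sturm

section ExponentialGeneratingFunction

variable {a : ℕ → ℝ} {C : ℝ}

lemma summable_mul_pow_div_factorial (ha : ∀ m, |a m| ≤ C) (y : ℝ) :
    Summable fun m ↦ a m * (y ^ m / m.factorial) := by
  refine Summable.of_norm_bounded ((Real.summable_pow_div_factorial |y|).mul_left C) fun m ↦ ?_
  rw [norm_mul, norm_div, norm_pow, RCLike.norm_natCast, Real.norm_eq_abs, Real.norm_eq_abs]
  gcongr
  exact ha m

lemma succ_mul_pow_div_factorial_succ (y : ℝ) (m : ℕ) :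
    ((m + 1 : ℕ) : ℝ) * y ^ m / (m + 1).factorial = y ^ m / m.factorial := by
  rw [Nat.factorial_succ, Nat.cast_mul, mul_div_mul_left _ _ (by positivity)]

lemma hasDerivAt_tsum_mul_pow_div_factorial (ha : ∀ m, |a m| ≤ C) (y : ℝ) :
    HasDerivAt (fun y ↦ ∑' m, a m * (y ^ m / m.factorial))
      (∑' m, a (m + 1) * (y ^ m / m.factorial)) y := by
  set R := |y| + 1 with hR
  have bound_summable : Summable fun m : ℕ ↦ C * (m * R ^ (m - 1) / m.factorial) := by
    refine Summable.mul_left C ((summable_nat_add_iff 1).1 ?_)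
    simpa only [add_tsub_cancel_right, succ_mul_pow_div_factorial_succ] using
      Real.summable_pow_div_factorial R
  have bound (m : ℕ) (x : ℝ) (hx : x ∈ Metric.ball 0 R) :
      ‖a m * (m * x ^ (m - 1) / m.factorial)‖ ≤ C * (m * R ^ (m - 1) / m.factorial) := by
    rw [mem_ball_zero_iff] at hx
    rw [norm_mul, norm_div, norm_mul, norm_pow, RCLike.norm_natCast, RCLike.norm_natCast]
    have hC : 0 ≤ C := (abs_nonneg _).trans (ha m)
    gcongr
    exact ha m
  have term_deriv (m : ℕ) (x : ℝ) (_ : x ∈ Metric.ball 0 R) : HasDerivAt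
      (fun x ↦ a m * (x ^ m / m.factorial)) (a m * (m * x ^ (m - 1) / m.factorial)) x :=
    ((hasDerivAt_pow m x).div_const _).const_mul _
  have hy : y ∈ Metric.ball 0 R := by simp [hR]
  refine (hasDerivAt_tsum_of_isPreconnected bound_summable Metric.isOpen_ball
    (convex_ball _ _).isPreconnected term_deriv bound hy
    (summable_mul_pow_div_factorial ha y) hy).congr_deriv ?_
  rw [(Summable.of_norm_bounded bound_summable fun m ↦ bound m y hy).tsum_eq_zero_add]
  simp only [add_tsub_cancel_right, succ_mul_pow_div_factorial_succ]
  simp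

end ExponentialGeneratingFunction

section Bessel

/-- The Bessel–Clifford function `C_ν`, the entire function with
`J_ν x = (x / 2) ^ ν * C_ν (x ^ 2 / 4)`. Its series is written with the factor `y ^ m / m!` set
apart, so that differentiation shifts the remaining coefficients. -/
noncomputable def besselClifford (ν : ℕ) (y : ℝ) : ℝ :=
  ∑' m : ℕ, (-1) ^ m / (m + ν).factorial * (y ^ m / m.factorial)

lemma abs_neg_one_pow_div_factorial_le_one (m k : ℕ) : |(-1 : ℝ) ^ m / k.factorial| ≤ 1 := by
  rw [abs_div, abs_pow, abs_neg, abs_one, one_pow, Nat.abs_cast]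
  exact div_le_one_of_le₀ (mod_cast k.factorial_pos) (by positivity)

lemma hasSum_besselClifford (ν : ℕ) (y : ℝ) :
    HasSum (fun m : ℕ ↦ (-1) ^ m / (m + ν).factorial * (y ^ m / m.factorial))
      (besselClifford ν y) :=
  (summable_mul_pow_div_factorial
    (fun m ↦ abs_neg_one_pow_div_factorial_le_one m (m + ν)) y).hasSum

lemma besselJ_eq_pow_mul_besselClifford (ν : ℕ) (x : ℝ) :
    besselJ ν x = (x / 2) ^ ν * besselClifford ν (x ^ 2 / 4) := by
  rw [besselJ, besselClifford, ← tsum_mul_left]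
  refine tsum_congr fun m ↦ ?_
  rw [show x ^ 2 / 4 = (x / 2) ^ 2 by ring, ← pow_mul, pow_add]
  field_simp

lemma hasDerivAt_besselClifford (ν : ℕ) (y : ℝ) :
    HasDerivAt (besselClifford ν) (-besselClifford (ν + 1) y) y := by
  refine (hasDerivAt_tsum_mul_pow_div_factorial
    (fun m ↦ abs_neg_one_pow_div_factorial_le_one m (m + ν)) y).congr_deriv ?_
  rw [besselClifford, ← tsum_neg]
  refine tsum_congr fun m ↦ ?_
  rw [pow_succ, show m + (ν + 1) = m + 1 + ν by ring]
  ring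

lemma besselClifford_add_mul_besselClifford_add_two (ν : ℕ) (y : ℝ) :
    besselClifford ν y + y * besselClifford (ν + 2) y = (ν + 1) * besselClifford (ν + 1) y := by
  set term : ℕ → ℝ := fun m ↦ (ν + 1) * ((-1) ^ m / (m + (ν + 1)).factorial *
    (y ^ m / m.factorial)) - (-1) ^ m / (m + ν).factorial * (y ^ m / m.factorial) with term_def
  have term_hasSum : HasSum term ((ν + 1) * besselClifford (ν + 1) y - besselClifford ν y) :=
    ((hasSum_besselClifford (ν + 1) y).mul_left _).sub (hasSum_besselClifford ν y)
  have term_zero : term 0 = 0 := by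
    simp only [term_def, zero_add, Nat.factorial_succ ν]
    push_cast
    field_simp
    ring
  have term_succ (m : ℕ) : term (m + 1) =
      y * ((-1) ^ m / (m + (ν + 2)).factorial * (y ^ m / m.factorial)) := by
    simp only [term_def]
    rw [show m + 1 + (ν + 1) = m + ν + 1 + 1 by ring, show m + (ν + 2) = m + ν + 1 + 1 by ring,
      show m + 1 + ν = m + ν + 1 by ring]
    simp only [Nat.factorial_succ]
    push_cast
    field_simp
    ring
  have shifted : HasSum (fun m ↦ term (m + 1)) (y * besselClifford (ν + 2) y) := by
    simpa only [term_succ] using (hasSum_besselClifford (ν + 2) y).mul_left y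
  have sums_eq := term_hasSum.unique ((hasSum_nat_add_iff 1).1 shifted)
  rw [Finset.sum_range_one, term_zero] at sums_eq
  linarith

lemma mul_besselJ_add_besselJ_add_two (ν : ℕ) (x : ℝ) :
    x * (besselJ ν x + besselJ (ν + 2) x) = 2 * (ν + 1) * besselJ (ν + 1) x := by
  simp only [besselJ_eq_pow_mul_besselClifford]
  linear_combination x * (x / 2) ^ ν * besselClifford_add_mul_besselClifford_add_two ν (x ^ 2 / 4)

lemma hasDerivAt_besselJ (ν : ℕ) {x : ℝ} (hx : x ≠ 0) :
    HasDerivAt (besselJ ν) (ν / x * besselJ ν x - besselJ (ν + 1) x) x := by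
  have hpow : HasDerivAt (fun x : ℝ ↦ (x / 2) ^ ν) (ν / x * (x / 2) ^ ν) x := by
    refine (((hasDerivAt_id x).div_const 2).pow ν).congr_deriv ?_
    rcases ν with _ | ν
    · simp
    · simp only [id, add_tsub_cancel_right, pow_succ]
      field_simp
  have hsq : HasDerivAt (fun x : ℝ ↦ x ^ 2 / 4) (x / 2) x :=
    ((hasDerivAt_pow 2 x).div_const 4).congr_deriv (by push_cast; ring)
  rw [funext (besselJ_eq_pow_mul_besselClifford ν), besselJ_eq_pow_mul_besselClifford (ν + 1)]
  refine (hpow.mul ((hasDerivAt_besselClifford ν _).comp x hsq)).congr_deriv ?_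
  simp only [Function.comp]
  ring

lemma hasDerivAt_besselJ_exp (ν : ℕ) (s : ℝ) :
    HasDerivAt (fun s ↦ besselJ ν (Real.exp s))
      (ν * besselJ ν (Real.exp s) - Real.exp s * besselJ (ν + 1) (Real.exp s)) s := by
  refine ((hasDerivAt_besselJ ν (Real.exp_ne_zero s)).comp s (Real.hasDerivAt_exp s)).congr_deriv ?_
  field_simp

/-- Bessel's equation in the variable `s = log x`. -/
lemma hasDerivAt_deriv_besselJ_exp (ν : ℕ) (s : ℝ) :
    HasDerivAt (fun s ↦ ν * besselJ ν (Real.exp s) - Real.exp s * besselJ (ν + 1) (Real.exp s))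
      (-((Real.exp s ^ 2 - ν ^ 2) * besselJ ν (Real.exp s))) s := by
  refine (((hasDerivAt_besselJ_exp ν s).const_mul (ν : ℝ)).sub
    ((Real.hasDerivAt_exp s).mul (hasDerivAt_besselJ_exp (ν + 1) s))).congr_deriv ?_
  push_cast
  linear_combination Real.exp s * mul_besselJ_add_besselJ_add_two ν (Real.exp s)

lemma pi_le_mul_log_sub_log_of_besselJ_zeros {ν : ℕ} {a b : ℝ} (ha : 0 < a) (hab : a < b)
    (hJa : besselJ ν a = 0) (hJb : besselJ ν b = 0) (hne : ∀ x ∈ Set.Ioo a b, besselJ ν x ≠ 0) :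
    π ≤ b * (Real.log b - Real.log a) := by
  have hb : 0 < b := ha.trans hab
  have exp_mem (s : ℝ) (hs : s ∈ Set.Ioo (Real.log a) (Real.log b)) :
      Real.exp s ∈ Set.Ioo a b :=
    ⟨(Real.log_lt_iff_lt_exp ha).1 hs.1, (Real.lt_log_iff_exp_lt hb).1 hs.2⟩
  refine pi_le_mul_sub_of_consecutive_zeros (Real.log_lt_log ha hab) hb
    (fun s _ ↦ hasDerivAt_besselJ_exp ν s) (fun s _ ↦ hasDerivAt_deriv_besselJ_exp ν s)
    (fun s hs ↦ ?_) (by rwa [Real.exp_log ha]) (by rwa [Real.exp_log hb])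
    fun s hs ↦ hne _ (exp_mem s hs)
  nlinarith [(exp_mem s hs).2, Real.exp_pos s, sq_nonneg (ν : ℝ)]

lemma min_one_le_sub_of_pi_le_mul_log_sub_log {a b : ℝ} (ha : 0 < a) (hab : a < b)
    (h : π ≤ b * (Real.log b - Real.log a)) : min 1 a ≤ b - a := by
  have hb : 0 < b := ha.trans hab
  rcases le_or_gt b (2 * a) with hle | hgt
  · refine min_le_of_left_le ?_
    have log_le : Real.log b - Real.log a ≤ (b - a) / a := by
      rw [← Real.log_div hb.ne' ha.ne', sub_div, div_self ha.ne']
      exact Real.log_le_sub_one_of_pos (div_pos hb ha)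
    have pi_mul_le : π * a ≤ b * (b - a) := by
      rw [← le_div_iff₀ ha, ← mul_div_assoc']
      exact h.trans (by gcongr)
    nlinarith [Real.pi_gt_three]
  · exact min_le_of_right_le (by linarith)

variable {ν : ℕ} {j : ℕ → ℝ}

lemma min_one_le_succ_sub_of_besselJ_zeros (hj_pos : ∀ k, 1 ≤ k → 0 < j k)
    (hj_mono : ∀ k l, 1 ≤ k → k < l → j k < j l) (hj_zero : ∀ k, 1 ≤ k → besselJ ν (j k) = 0)
    (hj_surj : ∀ x : ℝ, 0 < x → besselJ ν x = 0 → ∃ k, 1 ≤ k ∧ j k = x) {k : ℕ} (hk : 1 ≤ k) :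
    min 1 (j 1) ≤ j (k + 1) - j k := by
  have hj : StrictMonoOn j (Set.Ici 1) := fun k hk l _ hkl ↦ hj_mono k l hk hkl
  have hk' : 1 ≤ k + 1 := by omega
  have consecutive : ∀ x ∈ Set.Ioo (j k) (j (k + 1)), besselJ ν x ≠ 0 := by
    rintro x ⟨hkx, hxk⟩ hx
    obtain ⟨i, hi, rfl⟩ := hj_surj x ((hj_pos k hk).trans hkx) hx
    have := (hj.lt_iff_lt hk hi).1 hkx
    have := (hj.lt_iff_lt hi hk').1 hxk
    omega
  have hlt : j k < j (k + 1) := hj_mono k (k + 1) hk k.lt_succ_self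
  calc min 1 (j 1) ≤ min 1 (j k) :=
        min_le_min_left 1 (hj.monotoneOn Set.self_mem_Ici hk hk)
    _ ≤ j (k + 1) - j k :=
        min_one_le_sub_of_pi_le_mul_log_sub_log (hj_pos k hk) hlt
          (pi_le_mul_log_sub_log_of_besselJ_zeros (hj_pos k hk) hlt (hj_zero k hk)
            (hj_zero _ hk') consecutive)

end Bessel

section ReciprocalSums

variable {j : ℕ → ℝ} {c : ℝ}

lemma mul_le_sub_of_forall_le_succ_sub {p : ℕ} (hgap : ∀ k, p ≤ k → c ≤ j (k + 1) - j k) (d : ℕ) :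
    c * d ≤ j (p + d) - j p := by
  induction d with
  | zero => simp
  | succ d ih =>
    have := hgap (p + d) (Nat.le_add_right p d)
    rw [← add_assoc]
    push_cast
    linarith

lemma mul_sq_le_sq_sub_sq {p : ℕ} (hc : 0 ≤ c) (hp : 0 ≤ j p)
    (hgap : ∀ k, p ≤ k → c ≤ j (k + 1) - j k) (d : ℕ) :
    (c * d) ^ 2 ≤ j (p + d) ^ 2 - j p ^ 2 := by
  have hlin := mul_le_sub_of_forall_le_succ_sub hgap d
  have hcd : 0 ≤ c * d := by positivity
  nlinarith

lemma summable_inv_abs_sq_sub_sq {P : Set ℕ} (hP : P.Finite) (hc : 0 < c)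
    (hj : ∀ p ∈ P, 0 ≤ j p) (hgap : ∀ p ∈ P, ∀ k, p ≤ k → c ≤ j (k + 1) - j k) :
    Summable fun q : P × ℕ ↦ |j (q.1 + (q.2 + 1)) ^ 2 - j q.1 ^ 2|⁻¹ := by
  have : Finite P := hP
  have hrow : Summable fun d : ℕ ↦ ((c * (d + 1 : ℕ)) ^ 2)⁻¹ := by
    simpa only [mul_pow, mul_inv] using
      ((summable_nat_add_iff 1).2 (Real.summable_nat_pow_inv.2 one_lt_two)).mul_left (c ^ 2)⁻¹
  have hprod : Summable fun q : P × ℕ ↦ ((c * (q.2 + 1 : ℕ)) ^ 2)⁻¹ :=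
    (summable_prod_of_nonneg fun q ↦ by positivity).2 ⟨fun _ ↦ hrow, .of_finite⟩
  refine hprod.of_nonneg_of_le (fun q ↦ by positivity) fun ⟨p, d⟩ ↦ ?_
  gcongr
  exact (mul_sq_le_sq_sub_sq hc.le (hj p p.2) (hgap p p.2) (d + 1)).trans (le_abs_self _)

lemma summable_comp_of_injective_of_forall_mem_range {ι κ α : Type*} {g : α → ℝ} {f : κ → α}
    {ω : ι → α} (hg : Summable fun k ↦ g (f k)) (hω : Function.Injective ω)
    (hmem : ∀ i, ω i ∈ Set.range f) : Summable fun i ↦ g (ω i) := by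
  choose q hq using hmem
  have q_injective : Function.Injective q := fun i i' h ↦ hω (by rw [← hq, ← hq, h])
  simpa only [Function.comp_def, hq] using hg.comp_injective q_injective

lemma summable_inv_abs_sub {ι : Type*} {l : ι → ℝ} (hs : Summable fun n ↦ |l n|⁻¹)
    (hl : {n | l n = 0}.Finite) (x : ℝ) : Summable fun n ↦ |x - l n|⁻¹ := by
  refine Summable.of_norm_bounded_eventually (hs.mul_left 2) ?_
  have eventually_large : ∀ᶠ n in Filter.cofinite, |l n|⁻¹ < (2 * |x| + 1)⁻¹ :=
    hs.tendsto_cofinite_zero.eventually (gt_mem_nhds (by positivity))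
  filter_upwards [eventually_large, hl.compl_mem_cofinite] with n hn hn0
  have l_pos : 0 < |l n| := abs_pos.2 hn0
  have l_large : 2 * |x| + 1 < |l n| := (inv_lt_inv₀ l_pos (by positivity)).1 hn
  have half_le : |l n| / 2 ≤ |x - l n| := by
    linarith [abs_sub_abs_le_abs_sub (l n) x, abs_sub_comm x (l n)]
  calc ‖|x - l n|⁻¹‖ = |x - l n|⁻¹ := Real.norm_of_nonneg (by positivity)
    _ ≤ (|l n| / 2)⁻¹ := by gcongr
    _ = 2 * |l n|⁻¹ := by rw [inv_div, div_eq_mul_inv]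

end ReciprocalSums

section SquareDifferences

variable {ν : ℕ} {j : ℕ → ℝ}

lemma summable_inv_abs_of_mem_sq_sub_sq_besselJ_zeros (hj_pos : ∀ k, 1 ≤ k → 0 < j k)
    (hj_mono : ∀ k l, 1 ≤ k → k < l → j k < j l) (hj_zero : ∀ k, 1 ≤ k → besselJ ν (j k) = 0)
    (hj_surj : ∀ x : ℝ, 0 < x → besselJ ν x = 0 → ∃ k, 1 ≤ k ∧ j k = x)
    {P : Set ℕ} (hP : P.Finite) (hP_pos : ∀ p ∈ P, 1 ≤ p) {ι : Type*} {ω : ι → ℝ}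
    (hω : Function.Injective ω)
    (hω_mem : ∀ i, ∃ p ∈ P, ∃ n, p + 1 ≤ n ∧ ω i = j n ^ 2 - j p ^ 2) :
    Summable fun i ↦ |ω i|⁻¹ := by
  have diff_summable := summable_inv_abs_sq_sub_sq hP (lt_min one_pos (hj_pos 1 le_rfl))
    (fun p hp ↦ (hj_pos p (hP_pos p hp)).le)
    (fun p hp k hpk ↦ min_one_le_succ_sub_of_besselJ_zeros hj_pos hj_mono hj_zero hj_surj
      ((hP_pos p hp).trans hpk))
  refine summable_comp_of_injective_of_forall_mem_range (g := fun x ↦ |x|⁻¹) diff_summable hω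
    fun i ↦ ?_
  obtain ⟨p, hp, n, hn, hωi⟩ := hω_mem i
  obtain ⟨d, rfl⟩ := Nat.exists_eq_add_of_le hn
  exact ⟨(⟨p, hp⟩, d), by rw [hωi, add_assoc p 1 d, add_comm 1 d]⟩

end SquareDifferences

section OddExtension

variable {ω : ℕ → ℝ} {ωZ : ℤ → ℝ}

lemma strictMono_odd_extension (hω_pos : 0 < ω 1) (hω_mono : ∀ k, 1 ≤ k → ω k < ω (k + 1))
    (hωZ_zero : ωZ 0 = 0) (hωZ_pos : ∀ k : ℕ, 1 ≤ k → ωZ k = ω k)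
    (hωZ_neg : ∀ k : ℕ, 1 ≤ k → ωZ (-k) = -ω k) : StrictMono ωZ := by
  have neg_eq (k : ℕ) : ωZ (-k) = -ωZ k := by
    rcases k.eq_zero_or_pos with rfl | hk
    · simp [hωZ_zero]
    · rw [hωZ_neg k hk, hωZ_pos k hk]
  have nat_lt_succ (k : ℕ) : ωZ k < ωZ (k + 1 : ℕ) := by
    rw [hωZ_pos (k + 1) k.succ_pos]
    rcases k.eq_zero_or_pos with rfl | hk
    · simpa [hωZ_zero] using hω_pos
    · simpa [hωZ_pos k hk] using hω_mono k hk
  refine strictMono_int_of_lt_succ fun n ↦ ?_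
  rcases n with k | k
  · exact nat_lt_succ k
  · have negSucc_add_one : Int.negSucc k + 1 = -k := by omega
    rw [negSucc_add_one, Int.negSucc_eq, ← Nat.cast_succ, neg_eq, neg_eq, neg_lt_neg_iff]
    exact nat_lt_succ k

lemma summable_inv_abs_odd_extension (hωZ_pos : ∀ k : ℕ, 1 ≤ k → ωZ k = ω k)
    (hωZ_neg : ∀ k : ℕ, 1 ≤ k → ωZ (-k) = -ω k) (hs : Summable fun k ↦ |ω (k + 1)|⁻¹) :
    Summable fun n ↦ |ωZ n|⁻¹ := by
  refine Summable.of_nat_of_neg ((summable_nat_add_iff 1).1 ?_) ((summable_nat_add_iff 1).1 ?_)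
  · simpa only [hωZ_pos _ (Nat.le_add_left 1 _)] using hs
  · simpa only [hωZ_neg _ (Nat.le_add_left 1 _), abs_neg] using hs

end OddExtension

theorem stmt11_general (ν : ℕ) (j : ℕ → ℝ)
    (hj_pos : ∀ k, 1 ≤ k → 0 < j k)
    (hj_mono : ∀ k l, 1 ≤ k → k < l → j k < j l)
    (hj_zero : ∀ k, 1 ≤ k → besselJ ν (j k) = 0)
    (hj_surj : ∀ x : ℝ, 0 < x → besselJ ν x = 0 → ∃ k, 1 ≤ k ∧ j k = x)
    (P : Set ℕ) (hP : P.Finite) (hP_pos : ∀ p ∈ P, 1 ≤ p)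
    (ω : ℕ → ℝ)
    (hω_mono : ∀ k, 1 ≤ k → ω k < ω (k + 1))
    (hω_mem : ∀ k, 1 ≤ k → ∃ p ∈ P, ∃ n, p + 1 ≤ n ∧ ω k = j n ^ 2 - j p ^ 2)
    (ωZ : ℤ → ℝ)
    (hωZ_zero : ωZ 0 = 0)
    (hωZ_pos : ∀ k : ℕ, 1 ≤ k → ωZ k = ω k)
    (hωZ_neg : ∀ k : ℕ, 1 ≤ k → ωZ (-k) = -ω k)
    (T : ℝ) (hT : 0 < T) (m : ℤ) :
    ∃ ε : ℝ, 0 < ε ∧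
      ∀ c : ℤ → ℂ, (Function.support c).Finite → c m = 0 →
        ε ≤ ∫ t in (0 : ℝ)..T,
          ‖exp (I * ωZ m * t) - ∑' n : ℤ, c n * exp (I * ωZ n * t)‖ ^ 2 := by
  have hω_one : 0 < ω 1 := by
    obtain ⟨p, hp, n, hn, h⟩ := hω_mem 1 le_rfl
    rw [h, sub_pos]
    exact pow_lt_pow_left₀ (hj_mono p n (hP_pos p hp) hn) (hj_pos p (hP_pos p hp)).le two_ne_zero
  have hω_strictMono : StrictMono fun k ↦ ω (k + 1) :=
    strictMono_nat_of_lt_succ fun k ↦ hω_mono (k + 1) (Nat.le_add_left 1 k)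
  have hωZ_strictMono := strictMono_odd_extension hω_one hω_mono hωZ_zero hωZ_pos hωZ_neg
  have hω_summable : Summable fun k ↦ |ω (k + 1)|⁻¹ :=
    summable_inv_abs_of_mem_sq_sub_sq_besselJ_zeros hj_pos hj_mono hj_zero hj_surj hP hP_pos
      hω_strictMono.injective fun k ↦ hω_mem (k + 1) (Nat.le_add_left 1 k)
  have zero_finite : {n | ωZ n = 0}.Finite :=
    (Set.finite_singleton 0).subset fun n hn ↦ hωZ_strictMono.injective (hn.trans hωZ_zero.symm)
  exact exists_pos_le_integral_norm_exp_sub_tsum_sq hωZ_strictMono.injective m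
    (summable_inv_abs_sub (summable_inv_abs_odd_extension hωZ_pos hωZ_neg hω_summable)
      zero_finite (ωZ m)) hT

/-- With `(j_{0,k})_{k≥1}` the increasing enumeration of the positive
zeros of `J_0`, `(ω_k)_{k≥1}` the increasing enumeration of
`{j_{0,n}² - j_{0,p}² : p ∈ {1,2,3}, n ≥ p+1}`, `ω_0 := 0` and `ω_{-k} := -ω_k`, for
every `T > 0` the family `{e^{iω_n t} : n ∈ ℤ}` is minimal in `L²((0,T);ℂ)`: no member
lies in the `L²`-closure of the span of the others, i.e. for every `m ∈ ℤ` the `L²`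
distance from `e^{iω_m t}` to every finite linear combination of the other exponentials
is bounded below by a positive constant. -/
theorem stmt11 (j : ℕ → ℝ)
    (hj_pos : ∀ k, 1 ≤ k → 0 < j k)
    (hj_mono : ∀ k l, 1 ≤ k → k < l → j k < j l)
    (hj_zero : ∀ k, 1 ≤ k → besselJ 0 (j k) = 0)
    (hj_surj : ∀ x : ℝ, 0 < x → besselJ 0 x = 0 → ∃ k, 1 ≤ k ∧ j k = x)
    (ω : ℕ → ℝ)
    (hω_mono : ∀ k, 1 ≤ k → ω k < ω (k + 1))
    (hω_mem : ∀ k, 1 ≤ k → ω k ∈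
      {x : ℝ | ∃ p ∈ ({1, 2, 3} : Set ℕ), ∃ n, p + 1 ≤ n ∧ x = (j n) ^ 2 - (j p) ^ 2})
    (hω_surj : ∀ x ∈
      {x : ℝ | ∃ p ∈ ({1, 2, 3} : Set ℕ), ∃ n, p + 1 ≤ n ∧ x = (j n) ^ 2 - (j p) ^ 2},
      ∃ k, 1 ≤ k ∧ ω k = x)
    (ωZ : ℤ → ℝ)
    (hωZ_zero : ωZ 0 = 0)
    (hωZ_pos : ∀ k : ℕ, 1 ≤ k → ωZ (k : ℤ) = ω k)
    (hωZ_neg : ∀ k : ℕ, 1 ≤ k → ωZ (-(k : ℤ)) = -ω k)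
    (T : ℝ) (hT : 0 < T) :
    ∀ m : ℤ, ∃ ε : ℝ, 0 < ε ∧
      ∀ c : ℤ → ℂ, (Function.support c).Finite → c m = 0 →
        ε ≤ ∫ t in (0 : ℝ)..T,
          ‖Complex.exp (Complex.I * (ωZ m : ℂ) * (t : ℂ)) -
            ∑' n : ℤ, c n * Complex.exp (Complex.I * (ωZ n : ℂ) * (t : ℂ))‖ ^ 2 := by
  exact stmt11_general 0 j hj_pos hj_mono hj_zero hj_surj {1, 2, 3} (Set.toFinite _) (by simp)
    ω hω_mono hω_mem ωZ hωZ_zero hωZ_pos hωZ_neg T hT
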